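/- Let A be a Hopf algebra over a field k with bijective antipode S. The correspondence P ↦ N_P is a bijection between the set of two-sided group-like projections in A and the set of semisimple left coideal subalgebras N ⊆ A satisfying S²(N) = N. -/

import Mathlib

open scoped TensorProduct

noncomputable section

variable (k : Type*) [Field k] {A : Type*} [Ring A] [HopfAlgebra k A]

/-- `P` is a right group-like projection: a nonzero idempotent with
`Δ(P)(1 ⊗ P) = P ⊗ P = (1 ⊗ P)Δ(P)`. -/
def IsRightGroupLikeProjection (P : A) : Prop :=
  P ≠ 0 ∧ P * P = P ∧
    Coalgebra.comul (R := k) P * ((1 : A) ⊗ₜ[k] P) = P ⊗ₜ[k] P ∧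
    ((1 : A) ⊗ₜ[k] P) * Coalgebra.comul (R := k) P = P ⊗ₜ[k] P

/-- `P` is a left group-like projection: a nonzero idempotent with
`Δ(P)(P ⊗ 1) = P ⊗ P = (P ⊗ 1)Δ(P)`. -/
def IsLeftGroupLikeProjection (P : A) : Prop :=
  P ≠ 0 ∧ P * P = P ∧
    Coalgebra.comul (R := k) P * (P ⊗ₜ[k] (1 : A)) = P ⊗ₜ[k] P ∧
    (P ⊗ₜ[k] (1 : A)) * Coalgebra.comul (R := k) P = P ⊗ₜ[k] P

/-- A two-sided group-like projection. -/
def IsTwoSidedGroupLikeProjection (P : A) : Prop :=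
  IsRightGroupLikeProjection k P ∧ IsLeftGroupLikeProjection k P

/-- `N_P^l = {x : (1 ⊗ P)Δ(x) = x ⊗ P}`. -/
def NPlSet (P : A) : Set A :=
  {x : A | ((1 : A) ⊗ₜ[k] P) * Coalgebra.comul (R := k) x = x ⊗ₜ[k] P}

/-- `N_P^r = {x : Δ(x)(1 ⊗ P) = x ⊗ P}`. -/
def NPrSet (P : A) : Set A :=
  {x : A | Coalgebra.comul (R := k) x * ((1 : A) ⊗ₜ[k] P) = x ⊗ₜ[k] P}

/-- `N_P = N_P^l ∩ N_P^r`. -/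
def NPSet (P : A) : Set A := NPlSet k P ∩ NPrSet k P

/-- `V_P = {(μ ⊗ id)(Δ(P)) : μ ∈ A*}`, the smallest left coideal containing `P`. -/
def VPSet (P : A) : Set A :=
  {x : A | ∃ μ : A →ₗ[k] k,
    x = TensorProduct.lid k A ((TensorProduct.map μ LinearMap.id) (Coalgebra.comul (R := k) P))}

/-- A submodule `N ⊆ A` is a left coideal if `Δ(N) ⊆ A ⊗ N`. -/
def IsLeftCoideal (N : Submodule k A) : Prop :=
  ∀ x ∈ N, Coalgebra.comul (R := k) x ∈
    LinearMap.range (TensorProduct.map (LinearMap.id : A →ₗ[k] A) N.subtype)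

/-- A subalgebra `N ⊆ A` is a left coideal subalgebra if `Δ(N) ⊆ A ⊗ N`. -/
def IsLeftCoidealSubalgebra (N : Subalgebra k A) : Prop :=
  IsLeftCoideal k (Subalgebra.toSubmodule N)

/-!
The Galois map `a ⊗ b ↦ (a ⊗ 1)Δ(b)` of `A` is injective, and it sends `E = S(P₁) ⊗ P₂` to `1 ⊗ P`.
Applying it to both sides shows that `(1 ⊗ P)Δ(x) = x ⊗ P` is equivalent to
`(x ⊗ 1)E = E(1 ⊗ x)`. In the same way a two-sided group-like projection satisfies
`S(P) ⊗ P = P ⊗ P`, hence `S(P) = P`.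

Let `V` and `U` be the spaces of right and left slices of `Δ(P)`. They are finite-dimensional, and
`S(P) = P` gives `V ⊆ S(U)` and `U ⊆ S(V)`, so both are equalities by dimension. Therefore
`S²(V) = V` and `E ∈ V ⊗ V`. The identity `(x ⊗ 1)E = E(1 ⊗ x)` makes `V` stable under left
multiplication by `N_P`, and `1 = ε(P) = S(P₁)P₂` lies in `V · V ⊆ V`, which forces `N_P = V`.
Hence `N_P` is `S²`-stable, is contained in every left coideal subalgebra containing `P`, and is
semisimple because `E` is a separability idempotent for it.

Conversely, a semisimple left coideal subalgebra `N` contains a unique two-sided integral `P` with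
`ε(P) = 1`. It is a right group-like projection with `N ⊆ N_P`, and uniqueness together with
`S²(N) = N` gives `S²(P) = P`. Applying `S` to `S(P)P = P` then yields `S(P) = P`, so `P` is
two-sided and `N_P ⊆ N`.
-/

section Convolution

open Coalgebra WithConv Algebra.TensorProduct

variable {R C A B : Type*} [CommSemiring R] [AddCommMonoid C] [Module R C]
  [Semiring A] [Algebra R A] [Semiring B] [Algebra R B]

section CoalgebraStruct

variable [CoalgebraStruct R C]

lemma toConv_includeLeft_comp_mul_toConv_includeRight_comp (f : C →ₗ[R] A) (g : C →ₗ[R] B) :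
    toConv (includeLeft.toLinearMap ∘ₗ f) * toConv (includeRight.toLinearMap ∘ₗ g) =
      toConv (TensorProduct.map f g ∘ₗ comul) := by
  have h : LinearMap.mul' R (A ⊗[R] B) ∘ₗ TensorProduct.map (includeLeft.toLinearMap ∘ₗ f)
      (includeRight.toLinearMap ∘ₗ g) = TensorProduct.map f g := by
    ext; simp
  rw [LinearMap.convMul_def, ← LinearMap.comp_assoc]
  exact congrArg (fun φ ↦ toConv (φ ∘ₗ comul)) h

lemma toConv_includeRight_comp_mul_toConv_includeLeft_comp (f : C →ₗ[R] B) (g : C →ₗ[R] A) :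
    toConv (includeRight.toLinearMap ∘ₗ f) * toConv (includeLeft.toLinearMap ∘ₗ g) =
      toConv ((TensorProduct.comm R B A).toLinearMap ∘ₗ TensorProduct.map f g ∘ₗ comul) := by
  have h : LinearMap.mul' R (A ⊗[R] B) ∘ₗ TensorProduct.map (includeRight.toLinearMap ∘ₗ f)
      (includeLeft.toLinearMap ∘ₗ g) =
      (TensorProduct.comm R B A).toLinearMap ∘ₗ TensorProduct.map f g := by
    ext; simp
  rw [LinearMap.convMul_def, ← LinearMap.comp_assoc, ← LinearMap.comp_assoc]
  exact congrArg (fun φ ↦ toConv (φ ∘ₗ comul)) h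

end CoalgebraStruct

variable [Coalgebra R C]

lemma toConv_algHom_comp_mul_toConv_algHom_comp_eq_one (φ : A →ₐ[R] B) {f g : C →ₗ[R] A}
    (h : toConv f * toConv g = 1) :
    toConv (φ.toLinearMap ∘ₗ f) * toConv (φ.toLinearMap ∘ₗ g) = 1 := by
  have hφ := LinearMap.algHom_comp_convMul_distrib φ (toConv f) (toConv g)
  rw [h] at hφ
  refine ofConv_injective (hφ.symm.trans ?_)
  ext x
  simp

/-- In Sweedler notation, `f(x₁)g(x₂) ⊗ x₃ = 1 ⊗ x`. -/
lemma toConv_includeLeft_comp_mul_toConv_map_comp_comul {f g : C →ₗ[R] A}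
    {h : C →ₗ[R] B} (hfg : toConv f * toConv g = 1) :
    toConv (includeLeft.toLinearMap ∘ₗ f) * toConv (TensorProduct.map g h ∘ₗ comul) =
      toConv (includeRight.toLinearMap ∘ₗ h) := by
  rw [← toConv_includeLeft_comp_mul_toConv_includeRight_comp, ← mul_assoc,
    toConv_algHom_comp_mul_toConv_algHom_comp_eq_one _ hfg, one_mul]

end Convolution

section Antipode

open Coalgebra HopfAlgebra WithConv Algebra.TensorProduct

variable {R H : Type*} [CommSemiring R] [Semiring H] [HopfAlgebra R H]

lemma comul_antipode (x : H) :
    comul (R := R) (antipode R x) =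
      TensorProduct.comm R H H (TensorProduct.map (antipode R) (antipode R) (comul x)) := by
  have hleft : toConv ((TensorProduct.comm R H H).toLinearMap ∘ₗ
      TensorProduct.map (antipode R) (antipode R) ∘ₗ comul) * toConv (comul (R := R)) = 1 := by
    rw [← toConv_includeRight_comp_mul_toConv_includeLeft_comp, mul_assoc,
      ← LinearMap.id_comp (comul (R := R) (A := H)), ← TensorProduct.map_id,
      toConv_includeLeft_comp_mul_toConv_map_comp_comul LinearMap.antipode_mul_id,
      toConv_algHom_comp_mul_toConv_algHom_comp_eq_one _ LinearMap.antipode_mul_id]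
  have h := left_inv_eq_right_inv hleft (LinearMap.comul_right_inv (R := R) (C := H))
  exact (LinearMap.congr_fun (toConv_injective h) x).symm

lemma comm_map_antipode_mul (t u : H ⊗[R] H) :
    TensorProduct.comm R H H (TensorProduct.map (antipode R) (antipode R) (t * u)) =
      TensorProduct.comm R H H (TensorProduct.map (antipode R) (antipode R) u) *
        TensorProduct.comm R H H (TensorProduct.map (antipode R) (antipode R) t) := by
  induction t with
  | zero => simp
  | add t t' ht ht' => simp only [add_mul, mul_add, map_add, ht, ht']
  | tmul a b =>
    induction u with
    | zero => simp
    | add u u' hu hu' => simp only [add_mul, mul_add, map_add, hu, hu']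
    | tmul c d => simp [antipode_mul_antidistrib]

end Antipode

section TensorMul

open Algebra.TensorProduct

variable {R A B : Type*} [CommSemiring R] [Semiring A] [Algebra R A] [Semiring B] [Algebra R B]

lemma one_tmul_mul_eq_lTensor (b : B) (t : A ⊗[R] B) :
    (1 ⊗ₜ b) * t = (LinearMap.mulLeft R b).lTensor A t := by
  induction t with
  | zero => simp
  | add t u ht hu => simp only [mul_add, map_add, ht, hu]
  | tmul a c => simp

lemma mul_one_tmul_eq_lTensor (t : A ⊗[R] B) (b : B) :
    t * (1 ⊗ₜ b) = (LinearMap.mulRight R b).lTensor A t := by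
  induction t with
  | zero => simp
  | add t u ht hu => simp only [add_mul, map_add, ht, hu]
  | tmul a c => simp

lemma tmul_one_mul_eq_rTensor (a : A) (t : A ⊗[R] B) :
    (a ⊗ₜ 1) * t = (LinearMap.mulLeft R a).rTensor B t := by
  induction t with
  | zero => simp
  | add t u ht hu => simp only [mul_add, map_add, ht, hu]
  | tmul c b => simp

lemma rTensor_mul_one_tmul {C : Type*} [Semiring C] [Algebra R C] (f : A →ₗ[R] C)
    (t : A ⊗[R] B) (b : B) : f.rTensor B (t * (1 ⊗ₜ b)) = f.rTensor B t * (1 ⊗ₜ b) := by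
  simp only [mul_one_tmul_eq_lTensor, ← LinearMap.comp_apply, LinearMap.rTensor_comp_lTensor,
    LinearMap.lTensor_comp_rTensor]

end TensorMul

section Galois

open Coalgebra HopfAlgebra WithConv Algebra.TensorProduct

variable {R A B M : Type*} [CommSemiring R] [Semiring A] [Algebra R A] [Semiring B] [Algebra R B]
  [AddCommMonoid M] [Module R M]

/-- The left `A`-linear extension `a ⊗ m ↦ (a ⊗ 1) f(m)` of a linear map `f : M → A ⊗ B`. -/
def leftLinearExtension (f : M →ₗ[R] A ⊗[R] B) : A ⊗[R] M →ₗ[R] A ⊗[R] B :=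
  LinearMap.mul' R (A ⊗[R] B) ∘ₗ TensorProduct.map includeLeft.toLinearMap f

@[simp]
lemma leftLinearExtension_tmul (f : M →ₗ[R] A ⊗[R] B) (a : A) (m : M) :
    leftLinearExtension f (a ⊗ₜ m) = (a ⊗ₜ 1) * f m := by
  simp [leftLinearExtension]

lemma leftLinearExtension_tmul_one_mul (f : B →ₗ[R] A ⊗[R] B) (a : A) (t : A ⊗[R] B) :
    leftLinearExtension f ((a ⊗ₜ 1) * t) = (a ⊗ₜ 1) * leftLinearExtension f t := by
  induction t with
  | zero => simp
  | add t u ht hu => simp only [mul_add, map_add, ht, hu]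
  | tmul b c => simp [← mul_assoc]

variable (R) {H : Type*} [Semiring H]

section Bialgebra

variable [Bialgebra R H]

/-- The Galois map `a ⊗ b ↦ (a ⊗ 1)Δ(b)` of a bialgebra. -/
def galoisMap : H ⊗[R] H →ₗ[R] H ⊗[R] H := leftLinearExtension comul

@[simp]
lemma galoisMap_tmul (a b : H) : galoisMap R (a ⊗ₜ b) = (a ⊗ₜ 1) * comul b :=
  leftLinearExtension_tmul comul a b

lemma galoisMap_mul_one_tmul (t : H ⊗[R] H) (x : H) :
    galoisMap R (t * (1 ⊗ₜ x)) = galoisMap R t * comul x := by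
  induction t with
  | zero => simp
  | add t u ht hu => simp only [add_mul, map_add, ht, hu]
  | tmul b c => simp [mul_assoc]

end Bialgebra

variable [HopfAlgebra R H]

/-- `x ↦ S(x₁) ⊗ x₂`. The inverse of the Galois map is its left linear extension. -/
def antipodeTensor : H →ₗ[R] H ⊗[R] H := (antipode R).rTensor H ∘ₗ comul

lemma leftLinearExtension_antipodeTensor_comul (x : H) :
    leftLinearExtension (antipodeTensor R) (comul (R := R) x) = 1 ⊗ₜ x :=
  LinearMap.congr_fun (toConv_injective (toConv_includeLeft_comp_mul_toConv_map_comp_comul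
    (h := LinearMap.id) (LinearMap.id_mul_antipode (R := R) (C := H)))) x

lemma galoisMap_antipodeTensor (x : H) : galoisMap R (antipodeTensor R x) = 1 ⊗ₜ x := by
  have h := LinearMap.congr_fun (toConv_injective
    (toConv_includeLeft_comp_mul_toConv_map_comp_comul (h := LinearMap.id)
      (LinearMap.antipode_mul_id (R := R) (C := H)))) x
  simpa [galoisMap, leftLinearExtension, antipodeTensor] using h

lemma galoisMap_injective : Function.Injective (galoisMap R (H := H)) := by
  have hinv : leftLinearExtension (antipodeTensor R) ∘ₗ galoisMap R =
      LinearMap.id (M := H ⊗[R] H) :=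
    TensorProduct.ext' fun a b ↦ by
      simp [leftLinearExtension_tmul_one_mul, leftLinearExtension_antipodeTensor_comul]
  exact Function.LeftInverse.injective (g := leftLinearExtension (antipodeTensor R))
    (LinearMap.congr_fun hinv)

lemma mul'_antipodeTensor (x : H) :
    LinearMap.mul' R H (antipodeTensor R x) = algebraMap R H (counit x) :=
  mul_antipode_rTensor_comul_apply x

end Galois

section Slices

section CommSemiring

variable {R M N M' N' : Type*} [CommSemiring R] [AddCommMonoid M] [Module R M] [AddCommMonoid N]
  [Module R N] [AddCommMonoid M'] [Module R M'] [AddCommMonoid N'] [Module R N']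

/-- The submodule `{(μ ⊗ id)(t) : μ ∈ M*}` of right slices of a tensor `t ∈ M ⊗ N`. The slices of
`Δ(P)` form the coideal `V_P`. -/
def slices (t : M ⊗[R] N) : Submodule R N :=
  LinearMap.range ((TensorProduct.lid R N).toLinearMap ∘ₗ (LinearMap.rTensorHom N).flip t)

lemma mem_slices {t : M ⊗[R] N} {y : N} :
    y ∈ slices t ↔ ∃ μ : M →ₗ[R] R, TensorProduct.lid R N (μ.rTensor N t) = y :=
  Iff.rfl

lemma slices_rTensor_le (f : M →ₗ[R] M') (t : M ⊗[R] N) : slices (f.rTensor N t) ≤ slices t := by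
  rintro _ ⟨μ, rfl⟩
  exact ⟨μ ∘ₗ f, by simp [LinearMap.rTensor_comp_apply]⟩

lemma slices_lTensor (g : N →ₗ[R] N') (t : M ⊗[R] N) :
    slices (g.lTensor M t) = (slices t).map g := by
  have h (μ : M →ₗ[R] R) : TensorProduct.lid R N' (μ.rTensor N' (g.lTensor M t)) =
      g (TensorProduct.lid R N (μ.rTensor N t)) := by
    induction t with
    | zero => simp
    | add t u ht hu => simp only [map_add, ht, hu]
    | tmul m n => simp
  ext y
  simp only [mem_slices, Submodule.mem_map, h]
  exact ⟨fun ⟨μ, hμ⟩ ↦ ⟨_, ⟨μ, rfl⟩, hμ⟩, fun ⟨_, ⟨μ, hμ⟩, hy⟩ ↦ ⟨μ, hμ ▸ hy⟩⟩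

lemma slices_map_le (f : M →ₗ[R] M') (g : N →ₗ[R] N') (t : M ⊗[R] N) :
    slices (TensorProduct.map f g t) ≤ (slices t).map g := by
  rw [← LinearMap.rTensor_comp_lTensor, LinearMap.comp_apply, ← slices_lTensor]
  exact slices_rTensor_le f _

end CommSemiring

section CommRing

variable {R M N : Type*} [CommRing R] [AddCommGroup M] [Module R M] [AddCommGroup N]
  [Module R N] [Module.Free R M]

lemma slices_eq_bot_iff {t : M ⊗[R] N} : slices t = ⊥ ↔ t = 0 := by
  refine ⟨fun h ↦ ?_, fun h ↦ ?_⟩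
  · let b := Module.Free.chooseBasis R M
    have hcoord (i) (s : M ⊗[R] N) : TensorProduct.equivFinsuppOfBasisLeft b s i =
        TensorProduct.lid R N ((b.coord i).rTensor N s) := by
      induction s with
      | zero => simp
      | add s u hs hu => simp only [map_add, Finsupp.add_apply, hs, hu]
      | tmul m n => simp
    refine (TensorProduct.equivFinsuppOfBasisLeft b).injective (Finsupp.ext fun i ↦ ?_)
    rw [hcoord, map_zero, Finsupp.zero_apply, ← Submodule.mem_bot R, ← h]
    exact ⟨b.coord i, rfl⟩
  · simp [slices, h]

lemma slices_le_iff {t : M ⊗[R] N} {N' : Submodule R N} :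
    slices t ≤ N' ↔ t ∈ LinearMap.range (N'.subtype.lTensor M) := by
  have hexact := lTensor_exact M (LinearMap.exact_subtype_mkQ N') N'.mkQ_surjective
  rw [← LinearMap.exact_iff.mp hexact, LinearMap.mem_ker, ← slices_eq_bot_iff, slices_lTensor,
    ← le_bot_iff, Submodule.map_le_iff_le_comap, Submodule.comap_bot, N'.ker_mkQ]

end CommRing

section Field

variable {K M N : Type*} [Field K] [AddCommGroup M] [Module K M] [AddCommGroup N] [Module K N]

instance finiteDimensional_slices (t : M ⊗[K] N) : FiniteDimensional K (slices t) := by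
  obtain ⟨N', hN', ht⟩ := TensorProduct.exists_finite_submodule_right_of_setFinite {t}
    (Set.finite_singleton t)
  have := slices_le_iff.mpr (ht rfl)
  exact Submodule.finiteDimensional_of_le this

lemma slices_rTensor_of_injective {M' : Type*} [AddCommGroup M'] [Module K M'] {f : M →ₗ[K] M'}
    (hf : Function.Injective f) (t : M ⊗[K] N) : slices (f.rTensor N t) = slices t := by
  obtain ⟨g, hg⟩ := f.exists_leftInverse_of_injective (LinearMap.ker_eq_bot.mpr hf)
  refine (slices_rTensor_le f t).antisymm ?_
  calc slices t = slices (g.rTensor N (f.rTensor N t)) := by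
        rw [← LinearMap.rTensor_comp_apply, hg, LinearMap.rTensor_id_apply]
    _ ≤ slices (f.rTensor N t) := slices_rTensor_le g _

lemma mem_range_mapIncl {M' : Submodule K M} {N' : Submodule K N} {t : M ⊗[K] N}
    (hM : slices (TensorProduct.comm K M N t) ≤ M') (hN : slices t ≤ N') :
    t ∈ LinearMap.range (TensorProduct.mapIncl M' N') := by
  obtain ⟨s, rfl⟩ := slices_le_iff.mp hN
  rw [← LinearMap.rTensor_comm, slices_rTensor_of_injective N'.injective_subtype] at hM
  obtain ⟨r, hr⟩ := slices_le_iff.mp hM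
  refine ⟨TensorProduct.comm K N' M' r, ?_⟩
  rw [TensorProduct.mapIncl, ← LinearMap.lTensor_comp_rTensor, LinearMap.comp_apply,
    LinearMap.rTensor_comm, hr, TensorProduct.comm_comm]

end Field

end Slices

section Coinvariants

open Coalgebra

section CommSemiring

variable {R C M : Type*} [CommSemiring R] [AddCommMonoid C] [Module R C] [Coalgebra R C]
  [AddCommMonoid M] [Module R M]

/-- The relative coinvariants `{x | x₁ ⊗ f(x₂) = x ⊗ p}`. The subspaces `N_P^l` and `N_P^r` arise
when `f` is left or right multiplication by `p = P`. -/
def coinvariants (f : C →ₗ[R] M) (p : M) : Submodule R C :=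
  LinearMap.eqLocus (f.lTensor C ∘ₗ comul) ((TensorProduct.mk R C M).flip p)

variable {f : C →ₗ[R] M} {p : M} {x : C}

lemma mem_coinvariants : x ∈ coinvariants f p ↔ f.lTensor C (comul (R := R) x) = x ⊗ₜ p :=
  Iff.rfl

lemma apply_eq_counit_smul_of_mem_coinvariants (hx : x ∈ coinvariants f p) :
    f x = counit (R := R) x • p := by
  have h := congrArg (counit.rTensor M) (mem_coinvariants.mp hx)
  rw [← LinearMap.comp_apply, LinearMap.rTensor_comp_lTensor, ← LinearMap.lTensor_comp_rTensor,
    LinearMap.comp_apply, rTensor_counit_comul] at h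
  simpa using congrArg (TensorProduct.lid R M) h

lemma comul_mem_eqLocus_of_mem_coinvariants (hx : x ∈ coinvariants f p) :
    comul x ∈ LinearMap.eqLocus ((f.lTensor C ∘ₗ comul).lTensor C)
      (((TensorProduct.mk R C M).flip p).lTensor C) := by
  have hassoc : (f.lTensor C).lTensor C ∘ₗ (TensorProduct.assoc R C C C).toLinearMap =
      (TensorProduct.assoc R C C M).toLinearMap ∘ₗ f.lTensor (C ⊗[R] C) := by
    ext; simp
  have hflip : ((TensorProduct.mk R C M).flip p).lTensor C =
      (TensorProduct.assoc R C C M).toLinearMap ∘ₗ (TensorProduct.mk R (C ⊗[R] C) M).flip p := by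
    ext; simp
  calc (f.lTensor C ∘ₗ comul).lTensor C (comul x)
    _ = TensorProduct.assoc R C C M (f.lTensor (C ⊗[R] C) (comul.rTensor C (comul x))) := by
      rw [LinearMap.lTensor_comp_apply, ← coassoc_apply]
      exact LinearMap.congr_fun hassoc _
    _ = TensorProduct.assoc R C C M (comul.rTensor M (f.lTensor C (comul x))) := by
      rw [← LinearMap.comp_apply (f.lTensor _), LinearMap.lTensor_comp_rTensor,
        ← LinearMap.rTensor_comp_lTensor, LinearMap.comp_apply]
    _ = ((TensorProduct.mk R C M).flip p).lTensor C (comul x) := by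
      rw [mem_coinvariants.mp hx, LinearMap.rTensor_tmul, hflip]
      rfl

end CommSemiring

end Coinvariants

section LeftCoideal

open Coalgebra

variable {k} {N N' : Submodule k A}

lemma isLeftCoideal_coinvariants {M : Type*} [AddCommGroup M] [Module k M] (f : A →ₗ[k] M)
    (p : M) : IsLeftCoideal k (coinvariants f p) := fun _ hx ↦
  (Module.Flat.eqLocus_lTensor_eq k A _ _).le (comul_mem_eqLocus_of_mem_coinvariants hx)

lemma isLeftCoideal_iff_slices_le : IsLeftCoideal k N ↔ ∀ x ∈ N, slices (comul (R := k) x) ≤ N :=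
  forall₂_congr fun _ _ ↦ slices_le_iff.symm

lemma IsLeftCoideal.inf (hN : IsLeftCoideal k N) (hN' : IsLeftCoideal k N') :
    IsLeftCoideal k (N ⊓ N') := by
  rw [isLeftCoideal_iff_slices_le] at hN hN' ⊢
  exact fun x hx ↦ le_inf (hN x hx.1) (hN' x hx.2)

lemma IsLeftCoideal.le_coinvariants (hN : IsLeftCoideal k N) {M : Type*} [AddCommGroup M]
    [Module k M] {f : A →ₗ[k] M} {p : M} (hf : ∀ x ∈ N, f x = counit (R := k) x • p) :
    N ≤ coinvariants f p := by
  intro x hx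
  obtain ⟨t, ht⟩ := hN x hx
  have hcomp : f ∘ₗ N.subtype = LinearMap.toSpanSingleton k M p ∘ₗ counit ∘ₗ N.subtype :=
    LinearMap.ext fun y ↦ hf y y.2
  have ht' : N.subtype.lTensor A t = comul x := ht
  rw [mem_coinvariants, ← ht', ← LinearMap.lTensor_comp_apply, hcomp, LinearMap.lTensor_comp_apply,
    LinearMap.lTensor_comp_apply, ht', lTensor_counit_comul, LinearMap.lTensor_tmul,
    LinearMap.toSpanSingleton_apply, one_smul]

end LeftCoideal

section GroupLikeProjection

open Coalgebra HopfAlgebra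

variable {k} {P x : A}

lemma coe_coinvariants_mulLeft (P : A) :
    (coinvariants (LinearMap.mulLeft k P) P : Set A) = NPlSet k P :=
  Set.ext fun x ↦ by
    rw [SetLike.mem_coe, mem_coinvariants, ← one_tmul_mul_eq_lTensor, NPlSet, Set.mem_ofPred_eq]

lemma coe_coinvariants_mulRight (P : A) :
    (coinvariants (LinearMap.mulRight k P) P : Set A) = NPrSet k P :=
  Set.ext fun x ↦ by
    rw [SetLike.mem_coe, mem_coinvariants, ← mul_one_tmul_eq_lTensor, NPrSet, Set.mem_ofPred_eq]

lemma mul_eq_counit_smul_of_mem_NPlSet (hx : x ∈ NPlSet k P) : P * x = counit (R := k) x • P :=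
  apply_eq_counit_smul_of_mem_coinvariants ((coe_coinvariants_mulLeft P).ge hx)

lemma mul_eq_counit_smul_of_mem_NPrSet (hx : x ∈ NPrSet k P) : x * P = counit (R := k) x • P :=
  apply_eq_counit_smul_of_mem_coinvariants ((coe_coinvariants_mulRight P).ge hx)

variable (k) in
/-- The left coideal subalgebra `N_P`. -/
def NPSubalgebra (P : A) : Subalgebra k A where
  carrier := NPSet k P
  mul_mem' {x y} := by
    rintro ⟨hxl, hxr⟩ ⟨hyl, hyr⟩
    rw [NPlSet, Set.mem_ofPred_eq] at hxl hyl
    rw [NPrSet, Set.mem_ofPred_eq] at hxr hyr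
    constructor
    · rw [NPlSet, Set.mem_ofPred_eq]
      calc (1 ⊗ₜ P) * comul (R := k) (x * y) = (x ⊗ₜ 1) * ((1 ⊗ₜ P) * comul y) := by
            rw [Bialgebra.comul_mul, ← mul_assoc, hxl, ← mul_assoc]
            simp
        _ = (x * y) ⊗ₜ P := by simp [hyl]
    · rw [NPrSet, Set.mem_ofPred_eq]
      calc comul (R := k) (x * y) * (1 ⊗ₜ P) = comul x * (1 ⊗ₜ P) * (y ⊗ₜ 1) := by
            rw [Bialgebra.comul_mul, mul_assoc, hyr, mul_assoc]
            simp
        _ = (x * y) ⊗ₜ P := by simp [hxr]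
  add_mem' hx hy := by
    rw [NPSet, ← coe_coinvariants_mulLeft, ← coe_coinvariants_mulRight] at hx hy ⊢
    exact ⟨add_mem hx.1 hy.1, add_mem hx.2 hy.2⟩
  algebraMap_mem' r := by
    constructor <;> simp [NPlSet, NPrSet, Algebra.algebraMap_eq_smul_one,
      Algebra.TensorProduct.one_def, TensorProduct.smul_tmul']

lemma toSubmodule_NPSubalgebra (P : A) : Subalgebra.toSubmodule (NPSubalgebra k P) =
    coinvariants (LinearMap.mulLeft k P) P ⊓ coinvariants (LinearMap.mulRight k P) P :=
  SetLike.coe_injective <| by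
    rw [Submodule.coe_inf, coe_coinvariants_mulLeft, coe_coinvariants_mulRight]
    rfl

lemma isLeftCoidealSubalgebra_NPSubalgebra (P : A) :
    IsLeftCoidealSubalgebra k (NPSubalgebra k P) := by
  rw [IsLeftCoidealSubalgebra, toSubmodule_NPSubalgebra]
  exact (isLeftCoideal_coinvariants _ P).inf (isLeftCoideal_coinvariants _ P)

lemma IsLeftCoidealSubalgebra.le_NPSubalgebra {N : Subalgebra k A}
    (hN : IsLeftCoidealSubalgebra k N) (hl : ∀ x ∈ N, P * x = counit (R := k) x • P)
    (hr : ∀ x ∈ N, x * P = counit (R := k) x • P) : N ≤ NPSubalgebra k P := by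
  rw [← Subalgebra.toSubmodule.le_iff_le, toSubmodule_NPSubalgebra]
  exact le_inf (IsLeftCoideal.le_coinvariants hN hl) (IsLeftCoideal.le_coinvariants hN hr)

lemma mem_NPlSet_iff_tmul_one_mul_antipodeTensor : x ∈ NPlSet k P ↔
    (x ⊗ₜ 1) * antipodeTensor k P = antipodeTensor k P * (1 ⊗ₜ x) := by
  rw [← (galoisMap_injective k).eq_iff, galoisMap, leftLinearExtension_tmul_one_mul, ← galoisMap,
    galoisMap_mul_one_tmul, galoisMap_antipodeTensor, Algebra.TensorProduct.tmul_mul_tmul, mul_one,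
    one_mul]
  exact eq_comm

namespace IsRightGroupLikeProjection

lemma mem_NPSubalgebra (hP : IsRightGroupLikeProjection k P) : P ∈ NPSubalgebra k P :=
  ⟨hP.2.2.2, hP.2.2.1⟩

lemma counit_eq_one (hP : IsRightGroupLikeProjection k P) : counit (R := k) P = 1 := by
  have h := mul_eq_counit_smul_of_mem_NPlSet hP.mem_NPSubalgebra.1
  rw [hP.2.1] at h
  exact smul_left_injective k hP.1 (by simpa using h.symm)

lemma mul'_antipodeTensor_eq_one (hP : IsRightGroupLikeProjection k P) :
    LinearMap.mul' k A (antipodeTensor k P) = 1 := by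
  rw [mul'_antipodeTensor, hP.counit_eq_one, map_one]

lemma antipodeTensor_mul (hP : IsRightGroupLikeProjection k P) :
    antipodeTensor k P * (1 ⊗ₜ P) = antipode k P ⊗ₜ P := by
  rw [antipodeTensor, LinearMap.comp_apply, ← rTensor_mul_one_tmul, hP.2.2.1,
    LinearMap.rTensor_tmul]

lemma antipode_tmul_one_mul_comul
    (hP : IsRightGroupLikeProjection k P) : (antipode k P ⊗ₜ 1) * comul P = P ⊗ₜ[k] P := by
  rw [← galoisMap_tmul, ← hP.antipodeTensor_mul, galoisMap_mul_one_tmul, galoisMap_antipodeTensor,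
    hP.2.2.2]

lemma antipode_mul_self (hP : IsRightGroupLikeProjection k P) : antipode k P * P = P := by
  have h := congrArg ((counit (R := k)).lTensor A) hP.antipode_tmul_one_mul_comul
  rw [tmul_one_mul_eq_rTensor, ← LinearMap.comp_apply, LinearMap.lTensor_comp_rTensor,
    ← LinearMap.rTensor_comp_lTensor, LinearMap.comp_apply, lTensor_counit_comul] at h
  simpa [hP.counit_eq_one] using congrArg (TensorProduct.rid k A) h

lemma antipode_eq (hP : IsRightGroupLikeProjection k P)
    (hSS : antipode k (antipode k P) = P) : antipode k P = P := by
  have h := congrArg (antipode k) hP.antipode_mul_self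
  rw [antipode_mul_antidistrib, hSS, hP.antipode_mul_self] at h
  exact h.symm

lemma isTwoSided (hP : IsRightGroupLikeProjection k P) (hSP : antipode k P = P) :
    IsTwoSidedGroupLikeProjection k P := by
  have hcomul : TensorProduct.comm k A A
      (TensorProduct.map (antipode k) (antipode k) (comul P)) = comul (R := k) P := by
    rw [← comul_antipode, hSP]
  refine ⟨hP, hP.1, hP.2.1, ?_, ?_⟩
  · simpa [comm_map_antipode_mul, hcomul, hSP] using
      congrArg (TensorProduct.comm k A A ∘ TensorProduct.map (antipode k) (antipode k)) hP.2.2.2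
  · simpa [comm_map_antipode_mul, hcomul, hSP] using
      congrArg (TensorProduct.comm k A A ∘ TensorProduct.map (antipode k) (antipode k)) hP.2.2.1

end IsRightGroupLikeProjection

lemma IsTwoSidedGroupLikeProjection.antipode_eq (hP : IsTwoSidedGroupLikeProjection k P) :
    antipode k P = P := by
  have hgalois : galoisMap k (antipode k P ⊗ₜ P) = galoisMap k (P ⊗ₜ P) := by
    rw [galoisMap_tmul, galoisMap_tmul, hP.1.antipode_tmul_one_mul_comul, hP.2.2.2.2]
  have h := congrArg ((counit (R := k)).lTensor A) (galoisMap_injective k hgalois)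
  simpa [hP.1.counit_eq_one] using congrArg (TensorProduct.rid k A) h

lemma NPSubalgebra_injOn : Set.InjOn (NPSubalgebra k : A → Subalgebra k A)
    {P | IsTwoSidedGroupLikeProjection k P} := by
  intro P hP Q hQ h
  calc P = P * Q := by
        rw [mul_eq_counit_smul_of_mem_NPlSet (h ▸ hQ.1.mem_NPSubalgebra).1, hQ.1.counit_eq_one,
          one_smul]
    _ = Q := by
        rw [mul_eq_counit_smul_of_mem_NPrSet (h ▸ hP.1.mem_NPSubalgebra).2, hP.1.counit_eq_one,
          one_smul]

end GroupLikeProjection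

lemma eq_map_of_le_map_of_le_map {K M N : Type*} [DivisionRing K] [AddCommGroup M] [Module K M]
    [AddCommGroup N] [Module K N] {f : M →ₗ[K] N} {g : N →ₗ[K] M} {U : Submodule K M}
    {V : Submodule K N} [FiniteDimensional K U] [FiniteDimensional K V] (hV : V ≤ U.map f)
    (hU : U ≤ V.map g) : V = U.map f := by
  refine Submodule.eq_of_le_of_finrank_le hV ?_
  calc Module.finrank K (U.map f) ≤ Module.finrank K U := Submodule.finrank_map_le f U
    _ ≤ Module.finrank K (V.map g) := Submodule.finrank_mono hU
    _ ≤ Module.finrank K V := Submodule.finrank_map_le g V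

section MinimalCoideal

open Coalgebra HopfAlgebra

variable {k} {P x : A}

lemma slices_antipodeTensor_le (x : A) : slices (antipodeTensor k x) ≤ slices (comul (R := k) x) :=
  slices_rTensor_le _ _

lemma slices_comm_antipodeTensor (x : A) : slices (TensorProduct.comm k A A (antipodeTensor k x)) =
    (slices (TensorProduct.comm k A A (comul x))).map (antipode k) := by
  rw [antipodeTensor, LinearMap.comp_apply, ← LinearMap.lTensor_comm, slices_lTensor]

lemma slices_comul_antipode_le (x : A) : slices (comul (R := k) (antipode k x)) ≤
    (slices (TensorProduct.comm k A A (comul x))).map (antipode k) := by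
  rw [comul_antipode, ← TensorProduct.map_comm]
  exact slices_map_le _ _ _

lemma slices_comm_comul_antipode_le (x : A) :
    slices (TensorProduct.comm k A A (comul (antipode k x))) ≤
      (slices (comul (R := k) x)).map (antipode k) := by
  rw [comul_antipode, TensorProduct.comm_comm]
  exact slices_map_le _ _ _

lemma slices_comul_eq_map_antipode (hSP : antipode k P = P) : slices (comul (R := k) P) =
    (slices (TensorProduct.comm k A A (comul P))).map (antipode k) := by
  refine eq_map_of_le_map_of_le_map (g := antipode k) ?_ ?_
  · simpa only [hSP] using slices_comul_antipode_le (k := k) P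
  · simpa only [hSP] using slices_comm_comul_antipode_le (k := k) P

lemma slices_comm_comul_eq_map_antipode (hSP : antipode k P = P) :
    slices (TensorProduct.comm k A A (comul P)) = (slices (comul (R := k) P)).map (antipode k) := by
  refine eq_map_of_le_map_of_le_map (g := antipode k) ?_ (slices_comul_eq_map_antipode hSP).le
  simpa only [hSP] using slices_comm_comul_antipode_le (k := k) P

lemma antipodeTensor_mem_range_mapIncl (hSP : antipode k P = P) : antipodeTensor k P ∈
    LinearMap.range (TensorProduct.mapIncl (slices (comul (R := k) P)) (slices (comul P))) := by
  refine mem_range_mapIncl ?_ (slices_antipodeTensor_le P)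
  rw [slices_comm_antipodeTensor, ← slices_comul_eq_map_antipode hSP]

lemma map_mulLeft_slices_comm_antipodeTensor_le (hx : x ∈ NPlSet k P) :
    (slices (TensorProduct.comm k A A (antipodeTensor k P))).map (LinearMap.mulLeft k x) ≤
      slices (TensorProduct.comm k A A (antipodeTensor k P)) := by
  rw [← slices_lTensor, LinearMap.lTensor_comm, ← tmul_one_mul_eq_rTensor,
    mem_NPlSet_iff_tmul_one_mul_antipodeTensor.mp hx, mul_one_tmul_eq_lTensor,
    ← LinearMap.rTensor_comm]
  exact slices_rTensor_le _ _

lemma mul_mem_slices_comul (hSP : antipode k P = P) (hx : x ∈ NPlSet k P) {y : A}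
    (hy : y ∈ slices (comul (R := k) P)) : x * y ∈ slices (comul (R := k) P) := by
  rw [slices_comul_eq_map_antipode hSP, ← slices_comm_antipodeTensor] at hy ⊢
  exact map_mulLeft_slices_comm_antipodeTensor_le hx ⟨y, hy, rfl⟩

lemma slices_comul_le_of_mem {N : Subalgebra k A} (hN : IsLeftCoidealSubalgebra k N)
    (hP : P ∈ N) : slices (comul (R := k) P) ≤ Subalgebra.toSubmodule N :=
  isLeftCoideal_iff_slices_le.mp hN P hP

namespace IsRightGroupLikeProjection

lemma slices_comul_le_NPSubalgebra (hP : IsRightGroupLikeProjection k P) :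
    slices (comul (R := k) P) ≤ Subalgebra.toSubmodule (NPSubalgebra k P) :=
  slices_comul_le_of_mem (isLeftCoidealSubalgebra_NPSubalgebra P) hP.mem_NPSubalgebra

lemma one_mem_slices_comul (hP : IsRightGroupLikeProjection k P) (hSP : antipode k P = P) :
    1 ∈ slices (comul (R := k) P) := by
  obtain ⟨e, he⟩ := antipodeTensor_mem_range_mapIncl hSP
  have hclosed : slices (comul (R := k) P) * slices (comul P) ≤ slices (comul P) :=
    Submodule.mul_le.mpr fun _ hx _ hy ↦
      mul_mem_slices_comul hSP (hP.slices_comul_le_NPSubalgebra hx).1 hy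
  rw [← hP.mul'_antipodeTensor_eq_one, ← he]
  refine hclosed ?_
  rw [← Submodule.mulMap_range, Submodule.mulMap_eq_mul'_comp_mapIncl]
  exact ⟨e, rfl⟩

lemma toSubmodule_NPSubalgebra_eq (hP : IsRightGroupLikeProjection k P)
    (hSP : antipode k P = P) :
    Subalgebra.toSubmodule (NPSubalgebra k P) = slices (comul P) := by
  refine le_antisymm (fun x hx ↦ ?_) hP.slices_comul_le_NPSubalgebra
  simpa using mul_mem_slices_comul hSP hx.1 (hP.one_mem_slices_comul hSP)

lemma NPSubalgebra_le (hP : IsRightGroupLikeProjection k P) (hSP : antipode k P = P)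
    {N : Subalgebra k A} (hN : IsLeftCoidealSubalgebra k N) (hPN : P ∈ N) :
    NPSubalgebra k P ≤ N := by
  rw [← Subalgebra.toSubmodule.le_iff_le, hP.toSubmodule_NPSubalgebra_eq hSP]
  exact slices_comul_le_of_mem hN hPN

lemma map_antipode_comp_antipode_NPSubalgebra (hP : IsRightGroupLikeProjection k P)
    (hSP : antipode k P = P) :
    (Subalgebra.toSubmodule (NPSubalgebra k P)).map (antipode k ∘ₗ antipode k) =
      Subalgebra.toSubmodule (NPSubalgebra k P) := by
  rw [hP.toSubmodule_NPSubalgebra_eq hSP, Submodule.map_comp,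
    ← slices_comm_comul_eq_map_antipode hSP, ← slices_comul_eq_map_antipode hSP]

end IsRightGroupLikeProjection

end MinimalCoideal

section Separability

section Sandwich

variable {R B M N : Type*} [CommSemiring R] [Semiring B] [Algebra R B] [AddCommMonoid M]
  [Module R M] [Module B M] [IsScalarTower R B M] [AddCommMonoid N] [Module R N] [Module B N]
  [IsScalarTower R B N]

/-- The action `a ⊗ b ↦ (m ↦ a • f (b • m))` of `B ⊗ B` on a linear map `f`, used to average `f`
into a `B`-linear map. -/
def sandwich (f : M →ₗ[R] N) : B ⊗[R] B →ₗ[R] M →ₗ[R] N :=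
  TensorProduct.lift <| LinearMap.mk₂ R (fun a b ↦ Algebra.lsmul R R N a ∘ₗ f ∘ₗ
      Algebra.lsmul R R M b)
    (fun _ _ _ ↦ by rw [map_add, LinearMap.add_comp])
    (fun _ _ _ ↦ by rw [map_smul, LinearMap.smul_comp])
    (fun _ _ _ ↦ by rw [map_add, LinearMap.comp_add, LinearMap.comp_add])
    (fun _ _ _ ↦ by rw [map_smul, LinearMap.comp_smul, LinearMap.comp_smul])

variable (f : M →ₗ[R] N)

@[simp]
lemma sandwich_tmul_apply (a b : B) (m : M) : sandwich f (a ⊗ₜ b) m = a • f (b • m) :=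
  rfl

lemma sandwich_tmul_one_mul_apply (a : B) (t : B ⊗[R] B) (m : M) :
    sandwich f ((a ⊗ₜ 1) * t) m = a • sandwich f t m := by
  induction t with
  | zero => simp
  | add t u ht hu => simp only [mul_add, map_add, LinearMap.add_apply, smul_add, ht, hu]
  | tmul b c => simp [mul_smul]

lemma sandwich_mul_one_tmul_apply (t : B ⊗[R] B) (b : B) (m : M) :
    sandwich f (t * (1 ⊗ₜ b)) m = sandwich f t (b • m) := by
  induction t with
  | zero => simp
  | add t u ht hu => simp only [add_mul, map_add, LinearMap.add_apply, ht, hu]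
  | tmul a c => simp [mul_smul]

lemma sandwich_apply_of_leftInverse {f : M →ₗ[R] N} {g : N →ₗ[B] M}
    (hfg : Function.LeftInverse f g) (t : B ⊗[R] B) (n : N) :
    sandwich f t (g n) = LinearMap.mul' R B t • n := by
  induction t with
  | zero => simp
  | add t u ht hu => simp only [map_add, LinearMap.add_apply, add_smul, ht, hu]
  | tmul a b => rw [sandwich_tmul_apply, ← map_smul g, hfg, LinearMap.mul'_apply, mul_smul]

variable {e : B ⊗[R] B} (he : ∀ b : B, (b ⊗ₜ 1) * e = e * (1 ⊗ₜ b))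

/-- The `B`-linear average `m ↦ ∑ eᵢ • f (eᵢ' • m)` of a linear map `f` along a Casimir element
`∑ eᵢ ⊗ eᵢ'`. -/
def casimirAverage : M →ₗ[B] N where
  toFun := sandwich f e
  map_add' := map_add _
  map_smul' b m := by
    rw [RingHom.id_apply, ← sandwich_mul_one_tmul_apply, ← he, sandwich_tmul_one_mul_apply]

lemma casimirAverage_apply_of_leftInverse {f : M →ₗ[R] N} {g : N →ₗ[B] M}
    (hfg : Function.LeftInverse f g) (he_one : LinearMap.mul' R B e = 1) (n : N) :
    casimirAverage f he (g n) = n :=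
  (sandwich_apply_of_leftInverse hfg e n).trans <| by rw [he_one, one_smul]

end Sandwich

variable {K B : Type*} [Field K] [Ring B] [Algebra K B] {e : B ⊗[K] B}

lemma isSemisimpleModule_of_casimir (he : ∀ b : B, (b ⊗ₜ 1) * e = e * (1 ⊗ₜ b))
    (he_one : LinearMap.mul' K B e = 1) (M : Type*) [AddCommGroup M] [Module K M] [Module B M]
    [IsScalarTower K B M] : IsSemisimpleModule B M := by
  refine (isSemisimpleModule_iff B M).mpr ⟨fun I ↦ ?_⟩
  obtain ⟨f, hf⟩ := (I.subtype.restrictScalars K).exists_leftInverse_of_injective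
    (LinearMap.ker_eq_bot.mpr I.injective_subtype)
  have hf' : Function.LeftInverse f I.subtype := LinearMap.congr_fun hf
  exact ⟨_, LinearMap.isCompl_of_proj (casimirAverage_apply_of_leftInverse he hf' he_one)⟩

lemma isSemisimpleRing_subalgebra_of_casimir {N : Subalgebra K B}
    (hemem : e ∈ LinearMap.range (TensorProduct.mapIncl (Subalgebra.toSubmodule N)
      (Subalgebra.toSubmodule N)))
    (he : ∀ x ∈ N, (x ⊗ₜ 1) * e = e * (1 ⊗ₜ x)) (he_one : LinearMap.mul' K B e = 1) :
    IsSemisimpleRing N := by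
  obtain ⟨e', rfl⟩ := hemem
  change ∀ x ∈ N, (x ⊗ₜ 1) * Algebra.TensorProduct.map N.val N.val e' =
    Algebra.TensorProduct.map N.val N.val e' * (1 ⊗ₜ x) at he
  have hinj : Function.Injective (Algebra.TensorProduct.map N.val N.val) :=
    TensorProduct.map_injective_of_flat_flat _ _ Subtype.val_injective Subtype.val_injective
  refine isSemisimpleModule_of_casimir (e := e') (fun x ↦ hinj ?_) (Subtype.val_injective ?_) N
  · simpa using he x x.2
  · exact (LinearMap.congr_fun (AlgHom.comp_mul' N.val) e').trans he_one

end Separability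

section Semisimple

open Coalgebra HopfAlgebra

variable {k} {P : A}

lemma IsRightGroupLikeProjection.isSemisimpleRing_NPSubalgebra
    (hP : IsRightGroupLikeProjection k P) (hSP : antipode k P = P) :
    IsSemisimpleRing (NPSubalgebra k P) := by
  refine isSemisimpleRing_subalgebra_of_casimir (e := antipodeTensor k P) ?_
    (fun x hx ↦ mem_NPlSet_iff_tmul_one_mul_antipodeTensor.mp hx.1) ?_
  · rw [hP.toSubmodule_NPSubalgebra_eq hSP]
    exact antipodeTensor_mem_range_mapIncl hSP
  · exact hP.mul'_antipodeTensor_eq_one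

end Semisimple

section Integral

section AugmentedAlgebra

variable {R B : Type*} [CommRing R] [Ring B] [Algebra R B] [IsSemisimpleRing B]

lemma exists_left_integral (ε : B →ₐ[R] R) : ∃ p : B, ε p = 1 ∧ ∀ b, b * p = ε b • p := by
  obtain ⟨C, hC⟩ := exists_isCompl (RingHom.ker ε : Submodule B B)
  obtain ⟨a, ha, p, hp, hap⟩ := Submodule.mem_sup.mp
    (hC.sup_eq_top ▸ Submodule.mem_top : (1 : B) ∈ RingHom.ker ε ⊔ C)
  have hεp : ε p = 1 := by simpa [RingHom.mem_ker.mp ha] using congrArg ε hap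
  refine ⟨p, hεp, fun b ↦ ?_⟩
  have hmem : (b - algebraMap R B (ε b)) * p ∈ (RingHom.ker ε : Submodule B B) ⊓ C :=
    ⟨by simp [RingHom.mem_ker], C.smul_mem _ hp⟩
  rwa [hC.inf_eq_bot, Submodule.mem_bot, sub_mul, sub_eq_zero, ← Algebra.smul_def] at hmem

lemma exists_integral (ε : B →ₐ[R] R) :
    ∃ p : B, ε p = 1 ∧ (∀ b, b * p = ε b • p) ∧ ∀ b, p * b = ε b • p := by
  obtain ⟨p, hεp, hp⟩ := exists_left_integral ε
  obtain ⟨q, hεq, hq⟩ := exists_left_integral (AlgHom.fromOpposite ε fun _ _ ↦ Commute.all _ _)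
  have hq' (b : B) : q.unop * b = ε b • q.unop := congrArg MulOpposite.unop (hq (.op b))
  have hqp : q.unop = p := by
    calc q.unop = q.unop * p := by rw [hq', hεp, one_smul]
      _ = p := by rw [hp, show ε q.unop = 1 from hεq, one_smul]
  exact ⟨p, hεp, hp, fun b ↦ hqp ▸ hq' b⟩

end AugmentedAlgebra

open Coalgebra HopfAlgebra

variable {k} {P : A} {N : Subalgebra k A}

lemma IsLeftCoidealSubalgebra.isRightGroupLikeProjection (hN : IsLeftCoidealSubalgebra k N)
    (hPN : P ∈ N) (hP : counit (R := k) P = 1) (hl : ∀ x ∈ N, P * x = counit (R := k) x • P)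
    (hr : ∀ x ∈ N, x * P = counit (R := k) x • P) : IsRightGroupLikeProjection k P :=
  have hPNP := hN.le_NPSubalgebra hl hr hPN
  ⟨fun h ↦ by simp [h] at hP, by rw [hl P hPN, hP, one_smul], hPNP.2, hPNP.1⟩

lemma antipode_antipode_eq_of_integral (hPN : P ∈ N) (hP : counit (R := k) P = 1)
    (hl : ∀ x ∈ N, P * x = counit (R := k) x • P) (hr : ∀ x ∈ N, x * P = counit (R := k) x • P)
    (hS : (Subalgebra.toSubmodule N).map (antipode k ∘ₗ antipode k) = Subalgebra.toSubmodule N) :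
    antipode k (antipode k P) = P := by
  have hSSP : antipode k (antipode k P) ∈ N := hS.le ⟨P, hPN, rfl⟩
  obtain ⟨Q, hQN, hQP⟩ := hS.ge hPN
  replace hQP : antipode k (antipode k Q) = P := hQP
  have hQ : counit (R := k) Q = 1 := by rw [← hP, ← hQP, counit_antipode, counit_antipode]
  calc antipode k (antipode k P) = antipode k (antipode k (P * Q)) := by
        rw [hl Q hQN, hQ, one_smul]
    _ = antipode k (antipode k P) * P := by
      rw [antipode_mul_antidistrib, antipode_mul_antidistrib, hQP]
    _ = P := by rw [hr _ hSSP, counit_antipode, counit_antipode, hP, one_smul]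

lemma IsLeftCoidealSubalgebra.exists_NPSubalgebra_eq (hN : IsLeftCoidealSubalgebra k N)
    [IsSemisimpleRing N]
    (hS : (Subalgebra.toSubmodule N).map (antipode k ∘ₗ antipode k) = Subalgebra.toSubmodule N) :
    ∃ P, IsTwoSidedGroupLikeProjection k P ∧ NPSubalgebra k P = N := by
  obtain ⟨⟨P, hPN⟩, hP, hr, hl⟩ := exists_integral ((Bialgebra.counitAlgHom k A).comp N.val)
  replace hr (x : A) (hx : x ∈ N) : x * P = counit (R := k) x • P :=
    congrArg Subtype.val (hr ⟨x, hx⟩)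
  replace hl (x : A) (hx : x ∈ N) : P * x = counit (R := k) x • P :=
    congrArg Subtype.val (hl ⟨x, hx⟩)
  have hproj := hN.isRightGroupLikeProjection hPN hP hl hr
  have hSP := hproj.antipode_eq (antipode_antipode_eq_of_integral hPN hP hl hr hS)
  exact ⟨P, hproj.isTwoSided hSP,
    (hproj.NPSubalgebra_le hSP hN hPN).antisymm (hN.le_NPSubalgebra hl hr)⟩

end Integral

theorem statement1_general :
    ∃ e : {P : A // IsTwoSidedGroupLikeProjection k P} ≃
        {N : Subalgebra k A // IsLeftCoidealSubalgebra k N ∧ IsSemisimpleRing N ∧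
          (Subalgebra.toSubmodule N).map
            (HopfAlgebra.antipode (R := k) ∘ₗ HopfAlgebra.antipode (R := k)) =
            Subalgebra.toSubmodule N},
      ∀ P : {P : A // IsTwoSidedGroupLikeProjection k P},
        (((e P).1 : Subalgebra k A) : Set A) = NPSet k (P.1) := by
  let N (P : {P : A // IsTwoSidedGroupLikeProjection k P}) :
      {N : Subalgebra k A // IsLeftCoidealSubalgebra k N ∧ IsSemisimpleRing N ∧
        (Subalgebra.toSubmodule N).map (HopfAlgebra.antipode k ∘ₗ HopfAlgebra.antipode k) =
          Subalgebra.toSubmodule N} :=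
    have hSP := P.2.antipode_eq
    ⟨NPSubalgebra k P.1, isLeftCoidealSubalgebra_NPSubalgebra P.1,
      P.2.1.isSemisimpleRing_NPSubalgebra hSP, P.2.1.map_antipode_comp_antipode_NPSubalgebra hSP⟩
  have hinj : Function.Injective N := fun P Q h ↦
    Subtype.ext (NPSubalgebra_injOn P.2 Q.2 (congrArg Subtype.val h))
  have hsurj : Function.Surjective N := by
    rintro ⟨N', hN', _, hS⟩
    obtain ⟨P, hP, rfl⟩ := hN'.exists_NPSubalgebra_eq hS
    exact ⟨⟨P, hP⟩, rfl⟩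
  exact ⟨Equiv.ofBijective N ⟨hinj, hsurj⟩, fun _ ↦ rfl⟩

/-- Theorem: `P ↦ N_P` is a bijection between the set of two-sided group-like projections
in `A` and the set of semisimple left coideal subalgebras `N ⊆ A` with `S²(N) = N`. -/
theorem statement1
    (hS : Function.Bijective (HopfAlgebra.antipode (R := k) : A →ₗ[k] A)) :
    ∃ e : {P : A // IsTwoSidedGroupLikeProjection k P} ≃
        {N : Subalgebra k A // IsLeftCoidealSubalgebra k N ∧ IsSemisimpleRing N ∧
          (Subalgebra.toSubmodule N).map
            (HopfAlgebra.antipode (R := k) ∘ₗ HopfAlgebra.antipode (R := k)) =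
            Subalgebra.toSubmodule N},
      ∀ P : {P : A // IsTwoSidedGroupLikeProjection k P},
        (((e P).1 : Subalgebra k A) : Set A) = NPSet k (P.1) :=
  statement1_general k
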